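/- arXiv:1710.01849 — 3 statements merged into one kernel-verified Lean document; each statement's English description precedes it below -/
import Mathlib

section
/- For every (τ, I, φ, t), the map τ ↦ 𝓜̃(τ, I, φ, t) is differentiable, and each partial derivative equals the corresponding component of the Melnikov vector: ∂𝓜̃/∂τᵢ (τ, I, φ, t) = ∫_{−∞}^{∞} [P_i, h](p⁰(τ+σ1̄), q⁰(τ+σ1̄), I, φ+σω(I), t+σ) dσ, the integral on the right being absolutely convergent (note that [P_i, h] vanishes when the pendulum coordinates are (0,0), since ∇P_i(0,0) = 0). -/
/-!
Differentiate under the integral sign. The orbit of the `i`-th factor satisfies Hamilton's equations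
for `P i`, so by the chain rule the `τ i`-derivative of the integrand is `-[P i, H]`. The orbit
tends exponentially fast to `(0, 0)` in the cylinder, where the gradient of `P i` vanishes at least
linearly; hence its velocity is also exponentially small. As `H` is Lipschitz in the pendulum
variables, the `τ`-derivative of the integrand is at most a multiple of
`∑ i, exp (-lam * |τ i + σ|)`. Moving `τ` by at most `1` costs only a factor `exp lam`, which makes
this bound locally uniform in `τ`.

For the pendulum, `V'` is `1`-periodic, Lipschitz and zero at `0`, so that `|V' x|` is at most a
multiple of the distance from `x` to the nearest integer.
-/

open MeasureTheory

/-- The Melnikov potential, written in lifted coordinates (`H` is the lift of the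
perturbation `h`, and `qt0 i` is a lift of the `i`-th pendulum angle). -/
noncomputable def melnikovPotentialLift {n d : ℕ}
    (p0 qt0 : Fin n → ℝ → ℝ)
    (H : (Fin n → ℝ) × (Fin n → ℝ) × (Fin d → ℝ) × (Fin d → ℝ) × ℝ → ℝ)
    (ω : (Fin d → ℝ) → Fin d → ℝ)
    (τ : Fin n → ℝ) (I : Fin d → ℝ) (φ : Fin d → ℝ) (t : ℝ) : ℝ :=
  -∫ σ : ℝ,
    (H (fun i => p0 i (τ i + σ), fun i => qt0 i (τ i + σ), I,
        (fun j => φ j + σ * ω I j), t + σ)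
      - H (0, 0, I, (fun j => φ j + σ * ω I j), t + σ))

section ExponentialBounds

lemma integrable_exp_neg_mul_abs_add {lam : ℝ} (hlam : 0 < lam) (a : ℝ) :
    Integrable (fun σ : ℝ => Real.exp (-lam * |a + σ|)) := by
  have h_zero : Integrable (fun σ : ℝ => Real.exp (-lam * |σ|)) := by
    rw [← integrableOn_univ, ← Set.Iic_union_Ioi (a := (0 : ℝ)), integrableOn_union]
    constructor
    · refine (integrableOn_exp_mul_Iic hlam 0).congr_fun (fun x hx => ?_) measurableSet_Iic
      simp [abs_of_nonpos (Set.mem_Iic.1 hx)]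
    · refine (integrableOn_exp_mul_Ioi (neg_lt_zero.2 hlam) 0).congr_fun (fun x hx => ?_)
        measurableSet_Ioi
      simp [abs_of_pos (Set.mem_Ioi.1 hx)]
  exact h_zero.comp_add_left a

lemma exp_neg_mul_abs_add_le {lam a b : ℝ} (hlam : 0 ≤ lam) (hab : |a - b| ≤ 1) (σ : ℝ) :
    Real.exp (-lam * |a + σ|) ≤ Real.exp lam * Real.exp (-lam * |b + σ|) := by
  have h_shift : |b + σ| ≤ |a + σ| + 1 := calc
    |b + σ| = |(a + σ) - (a - b)| := by ring_nf
    _ ≤ |a + σ| + |a - b| := abs_sub _ _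
    _ ≤ |a + σ| + 1 := by gcongr
  rw [← Real.exp_add]
  gcongr
  nlinarith

variable {ι : Type*} [Fintype ι] {lam : ℝ}

lemma integrable_const_mul_sum_exp (hlam : 0 < lam) (A : ℝ) (τ : ι → ℝ) :
    Integrable (fun σ : ℝ => A * ∑ i, Real.exp (-lam * |τ i + σ|)) :=
  (integrable_finsetSum _ fun i _ => integrable_exp_neg_mul_abs_add hlam (τ i)).const_mul A

lemma hasFDerivAt_integral_of_norm_fderiv_le_sum_exp {G : Type*} [NormedAddCommGroup G]
    [NormedSpace ℝ G] {F : (ι → ℝ) → ℝ → G} {F' : (ι → ℝ) → ℝ → (ι → ℝ) →L[ℝ] G}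
    {A : ℝ} {τ : ι → ℝ} (hlam : 0 < lam)
    (hF_meas : ∀ τ', AEStronglyMeasurable (F τ')) (hF_int : Integrable (F τ))
    (hF'_meas : AEStronglyMeasurable (F' τ))
    (hF'_bound : ∀ τ' σ, ‖F' τ' σ‖ ≤ A * ∑ i, Real.exp (-lam * |τ' i + σ|))
    (hF' : ∀ τ' σ, HasFDerivAt (F · σ) (F' τ' σ) τ') :
    HasFDerivAt (fun τ' => ∫ σ, F τ' σ) (∫ σ, F' τ σ) τ := by
  have h_bound : ∀ σ, ∀ τ' ∈ Metric.closedBall τ 1,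
      ‖F' τ' σ‖ ≤ |A| * Real.exp lam * ∑ i, Real.exp (-lam * |τ i + σ|) := by
    intro σ τ' hτ'
    calc ‖F' τ' σ‖ ≤ |A| * ∑ i, Real.exp (-lam * |τ' i + σ|) :=
          (hF'_bound τ' σ).trans (by gcongr; exact le_abs_self A)
      _ ≤ |A| * ∑ i, Real.exp lam * Real.exp (-lam * |τ i + σ|) := by
          gcongr with i
          exact exp_neg_mul_abs_add_le hlam.le ((dist_le_pi_dist τ' τ i).trans hτ') σ
      _ = |A| * Real.exp lam * ∑ i, Real.exp (-lam * |τ i + σ|) := by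
          rw [← Finset.mul_sum, mul_assoc]
  exact hasFDerivAt_integral_of_dominated_of_fderiv_le
    (Metric.closedBall_mem_nhds τ one_pos) (.of_forall hF_meas) hF_int hF'_meas
    (.of_forall h_bound) (integrable_const_mul_sum_exp hlam _ τ)
    (.of_forall fun σ τ' _ => hF' τ' σ)

end ExponentialBounds

section ShiftedOrbit

variable {ι E : Type*}

/-- The point `(p(τ + σ1̄), q(τ + σ1̄), c σ)` of the extended phase space. The curve `c` collects
the variables that do not depend on `τ`, such as `(I, φ + σω(I), t + σ)`. -/
def shiftedOrbit (p q : ι → ℝ → ℝ) (c : ℝ → E) (τ : ι → ℝ) (σ : ℝ) :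
    (ι → ℝ) × (ι → ℝ) × E :=
  (fun k => p k (τ k + σ), fun k => q k (τ k + σ), c σ)

/-- The Melnikov potential of `H` relative to the origin of the pendulum variables, along an
arbitrary curve `c` of the remaining variables. -/
noncomputable def melnikovPotentialAlong (p q : ι → ℝ → ℝ) (H : (ι → ℝ) × (ι → ℝ) × E → ℝ)
    (c : ℝ → E) (τ : ι → ℝ) : ℝ :=
  -∫ σ, (H (shiftedOrbit p q c τ σ) - H (0, 0, c σ))

lemma continuous_shiftedOrbit [TopologicalSpace E] {p q : ι → ℝ → ℝ} {c : ℝ → E}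
    (hp : ∀ i, Continuous (p i)) (hq : ∀ i, Continuous (q i)) (hc : Continuous c) (τ : ι → ℝ) :
    Continuous (shiftedOrbit p q c τ) := by
  unfold shiftedOrbit
  fun_prop

variable [NormedAddCommGroup E] [NormedSpace ℝ E]

variable (E) in
/-- The differential of `τ ↦ shiftedOrbit p q c τ σ`, where `p'` and `q'` are the velocities of
`p` and `q`. -/
noncomputable def shiftedOrbitDeriv (p' q' : ι → ℝ → ℝ) (τ : ι → ℝ) (σ : ℝ) :
    (ι → ℝ) →L[ℝ] (ι → ℝ) × (ι → ℝ) × E :=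
  (ContinuousLinearMap.pi fun k => p' k (τ k + σ) • ContinuousLinearMap.proj k).prod
    ((ContinuousLinearMap.pi fun k => q' k (τ k + σ) • ContinuousLinearMap.proj k).prod 0)

lemma shiftedOrbitDeriv_apply (p' q' : ι → ℝ → ℝ) (τ v : ι → ℝ) (σ : ℝ) :
    shiftedOrbitDeriv E p' q' τ σ v =
      (fun k => p' k (τ k + σ) * v k, fun k => q' k (τ k + σ) * v k, 0) :=
  rfl

lemma shiftedOrbitDeriv_single [DecidableEq ι] (p' q' : ι → ℝ → ℝ) (τ : ι → ℝ) (σ : ℝ) (i : ι) :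
    shiftedOrbitDeriv E p' q' τ σ (Pi.single i 1) =
      p' i (τ i + σ) • (Pi.single i 1, 0, 0) + q' i (τ i + σ) • (0, Pi.single i 1, 0) := by
  rw [shiftedOrbitDeriv_apply]
  ext k
  · by_cases hk : k = i <;> simp [hk]
  · by_cases hk : k = i <;> simp [hk]
  · simp

lemma hasFDerivAt_shiftedOrbit [Finite ι] {p q p' q' : ι → ℝ → ℝ}
    (hp : ∀ i s, HasDerivAt (p i) (p' i s) s) (hq : ∀ i s, HasDerivAt (q i) (q' i s) s)
    (c : ℝ → E) (τ : ι → ℝ) (σ : ℝ) :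
    HasFDerivAt (shiftedOrbit p q c · σ) (shiftedOrbitDeriv E p' q' τ σ) τ := by
  have := Fintype.ofFinite ι
  have h_shift {f f' : ι → ℝ → ℝ} (hf : ∀ i s, HasDerivAt (f i) (f' i s) s) :
      HasFDerivAt (fun (τ : ι → ℝ) k => f k (τ k + σ))
        (ContinuousLinearMap.pi fun k =>
          f' k (τ k + σ) • (ContinuousLinearMap.proj k : (ι → ℝ) →L[ℝ] ℝ)) τ :=
    hasFDerivAt_pi.2 fun k =>
      (hf k (τ k + σ)).comp_hasFDerivAt τ ((hasFDerivAt_apply k τ).add_const σ)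
  exact (h_shift hp).prodMk ((h_shift hq).prodMk (hasFDerivAt_const (c σ) τ))

lemma continuous_comp_shiftedOrbitDeriv [Finite ι] {p' q' : ι → ℝ → ℝ}
    (hp' : ∀ i, Continuous (p' i)) (hq' : ∀ i, Continuous (q' i))
    {D : ℝ → (ι → ℝ) × (ι → ℝ) × E →L[ℝ] ℝ} (hD : Continuous D) (τ : ι → ℝ) :
    Continuous fun σ => (D σ).comp (shiftedOrbitDeriv E p' q' τ σ) := by
  have := Fintype.ofFinite ι
  refine continuous_clm_apply.2 fun v => ?_
  simp only [ContinuousLinearMap.comp_apply, shiftedOrbitDeriv_apply]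
  fun_prop

variable [Fintype ι] [DecidableEq ι]

lemma norm_le_sum_norm_apply_single {G : Type*} [NormedAddCommGroup G]
    [NormedSpace ℝ G] (f : (ι → ℝ) →L[ℝ] G) : ‖f‖ ≤ ∑ i, ‖f (Pi.single i 1)‖ := by
  refine f.opNorm_le_bound (Finset.sum_nonneg fun i _ => norm_nonneg _) fun v => ?_
  calc ‖f v‖ = ‖∑ i, v i • f (Pi.single i 1)‖ := by
        conv_lhs => rw [pi_eq_sum_univ' v, map_sum]
        simp only [map_smul]
    _ ≤ ∑ i, ‖v i • f (Pi.single i 1)‖ := norm_sum_le _ _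
    _ ≤ ∑ i, ‖f (Pi.single i 1)‖ * ‖v‖ := by
        gcongr with i
        rw [norm_smul, mul_comm]
        gcongr
        exact norm_le_pi_norm v i
    _ = (∑ i, ‖f (Pi.single i 1)‖) * ‖v‖ := (Finset.sum_mul ..).symm

lemma norm_comp_shiftedOrbitDeriv_le {p' q' : ι → ℝ → ℝ} {lam B K : ℝ}
    (hp' : ∀ i s, |p' i s| ≤ B * Real.exp (-lam * |s|))
    (hq' : ∀ i s, |q' i s| ≤ B * Real.exp (-lam * |s|))
    {D : (ι → ℝ) × (ι → ℝ) × E →L[ℝ] ℝ}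
    (hDp : ∀ i, |D (Pi.single i 1, 0, 0)| ≤ K) (hDq : ∀ i, |D (0, Pi.single i 1, 0)| ≤ K)
    (τ : ι → ℝ) (σ : ℝ) :
    ‖D.comp (shiftedOrbitDeriv E p' q' τ σ)‖ ≤
      2 * B * K * ∑ i, Real.exp (-lam * |τ i + σ|) := by
  have h_single (i : ι) : ‖D (shiftedOrbitDeriv E p' q' τ σ (Pi.single i 1))‖ ≤
      2 * B * K * Real.exp (-lam * |τ i + σ|) := calc
    ‖D (shiftedOrbitDeriv E p' q' τ σ (Pi.single i 1))‖
        = |p' i (τ i + σ) * D (Pi.single i 1, 0, 0) +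
            q' i (τ i + σ) * D (0, Pi.single i 1, 0)| := by
          rw [shiftedOrbitDeriv_single, map_add, map_smul, map_smul, smul_eq_mul, smul_eq_mul,
            Real.norm_eq_abs]
    _ ≤ |p' i (τ i + σ)| * |D (Pi.single i 1, 0, 0)| +
          |q' i (τ i + σ)| * |D (0, Pi.single i 1, 0)| := by
          rw [← abs_mul, ← abs_mul]
          exact abs_add_le _ _
    _ ≤ B * Real.exp (-lam * |τ i + σ|) * K + B * Real.exp (-lam * |τ i + σ|) * K := by
          gcongr
          exacts [(abs_nonneg _).trans (hp' i _), hp' i _, hDp i,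
            (abs_nonneg _).trans (hp' i _), hq' i _, hDq i]
    _ = 2 * B * K * Real.exp (-lam * |τ i + σ|) := by ring
  calc ‖D.comp (shiftedOrbitDeriv E p' q' τ σ)‖
      ≤ ∑ i, ‖D (shiftedOrbitDeriv E p' q' τ σ (Pi.single i 1))‖ :=
        norm_le_sum_norm_apply_single _
    _ ≤ 2 * B * K * ∑ i, Real.exp (-lam * |τ i + σ|) := by
        rw [Finset.mul_sum]
        exact Finset.sum_le_sum fun i _ => h_single i

end ShiftedOrbit

section PendulumLipschitz

variable {ι E : Type*} [Fintype ι]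

/-- Lipschitz continuity in the pendulum variables, uniformly in the remaining ones. The angles are
given by lifts but compared on the circle, so that `H` is in particular `1`-periodic in each. -/
def PendulumLipschitz (K : ℝ) (H : (ι → ℝ) × (ι → ℝ) × E → ℝ) : Prop :=
  ∀ p q p' q' z, |H (p, q, z) - H (p', q', z)| ≤
    K * ((∑ i, |p i - p' i|) + ∑ i, dist (q i : UnitAddCircle) (q' i : UnitAddCircle))

lemma dist_coe_unitAddCircle_le (x y : ℝ) :
    dist (x : UnitAddCircle) (y : UnitAddCircle) ≤ |x - y| := by
  rw [dist_eq_norm, ← AddCircle.coe_sub]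
  exact QuotientAddGroup.norm_mk_le_norm

lemma sum_abs_add_smul_single_sub [DecidableEq ι] (u : ι → ℝ) (i : ι) (s : ℝ) :
    ∑ k, |(u + s • (Pi.single i 1 : ι → ℝ)) k - u k| = |s| := by
  simp [Pi.single_apply, apply_ite abs]

lemma norm_fderiv_apply_le_of_norm_sub_le {F G : Type*} [NormedAddCommGroup F] [NormedSpace ℝ F]
    [NormedAddCommGroup G] [NormedSpace ℝ G] {f : F → G} {x v : F} {C : ℝ}
    (hf : DifferentiableAt ℝ f x) (hC : 0 ≤ C)
    (hlip : ∀ s : ℝ, ‖f (x + s • v) - f x‖ ≤ C * |s|) : ‖fderiv ℝ f x v‖ ≤ C :=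
  HasDerivAt.le_of_lip' (hf.hasFDerivAt.hasLineDerivAt v) hC
    (.of_forall fun s => by simpa using hlip s)

variable {K : ℝ} {H : (ι → ℝ) × (ι → ℝ) × E → ℝ}

namespace PendulumLipschitz

lemma abs_sub_le (hH : PendulumLipschitz K H) (hK : 0 ≤ K) (p q p' q' : ι → ℝ) (z : E) :
    |H (p, q, z) - H (p', q', z)| ≤ K * ((∑ i, |p i - p' i|) + ∑ i, |q i - q' i|) :=
  (hH p q p' q' z).trans (by gcongr; exact dist_coe_unitAddCircle_le _ _)

lemma abs_sub_shiftedOrbit_le (hH : PendulumLipschitz K H) (hK : 0 ≤ K) {p q : ι → ℝ → ℝ}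
    {lam C : ℝ}
    (hdecay : ∀ i s, |p i s| + dist (q i s : UnitAddCircle) 0 ≤ C * Real.exp (-lam * |s|))
    (c : ℝ → E) (τ : ι → ℝ) (σ : ℝ) :
    |H (shiftedOrbit p q c τ σ) - H (0, 0, c σ)| ≤
      K * C * ∑ i, Real.exp (-lam * |τ i + σ|) := calc
  |H (shiftedOrbit p q c τ σ) - H (0, 0, c σ)|
      ≤ K * ∑ i, (|p i (τ i + σ)| + dist (q i (τ i + σ) : UnitAddCircle) 0) := by
        simpa [shiftedOrbit, Finset.sum_add_distrib] using hH (fun k => p k (τ k + σ))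
          (fun k => q k (τ k + σ)) 0 0 (c σ)
  _ ≤ K * ∑ i, C * Real.exp (-lam * |τ i + σ|) := by
        gcongr with i
        exact hdecay i _
  _ = K * C * ∑ i, Real.exp (-lam * |τ i + σ|) := by rw [← Finset.mul_sum, mul_assoc]

variable [NormedAddCommGroup E] [NormedSpace ℝ E] [DecidableEq ι]

lemma abs_fderiv_momentum_le (hH : PendulumLipschitz K H) (hK : 0 ≤ K)
    (hdiff : Differentiable ℝ H) (x : (ι → ℝ) × (ι → ℝ) × E) (i : ι) :
    |fderiv ℝ H x (Pi.single i 1, 0, 0)| ≤ K := by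
  refine norm_fderiv_apply_le_of_norm_sub_le (hdiff x) hK fun s => ?_
  obtain ⟨p, q, z⟩ := x
  simpa [-Pi.add_apply, sum_abs_add_smul_single_sub] using
    hH.abs_sub_le hK (p + s • (Pi.single i 1 : ι → ℝ)) q p q z

lemma abs_fderiv_angle_le (hH : PendulumLipschitz K H) (hK : 0 ≤ K)
    (hdiff : Differentiable ℝ H) (x : (ι → ℝ) × (ι → ℝ) × E) (i : ι) :
    |fderiv ℝ H x (0, Pi.single i 1, 0)| ≤ K := by
  refine norm_fderiv_apply_le_of_norm_sub_le (hdiff x) hK fun s => ?_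
  obtain ⟨p, q, z⟩ := x
  simpa [-Pi.add_apply, sum_abs_add_smul_single_sub] using
    hH.abs_sub_le hK p (q + s • (Pi.single i 1 : ι → ℝ)) p q z

end PendulumLipschitz

end PendulumLipschitz

section MelnikovPotential

variable {ι E : Type*} [NormedAddCommGroup E] [NormedSpace ℝ E]

/-- The Poisson bracket `[P, H]` of a Hamiltonian `P`, a function of the `i`-th pendulum variables
`(pᵢ, qᵢ)`, with `H`, in the sign convention `∂P/∂qᵢ * ∂H/∂pᵢ - ∂P/∂pᵢ * ∂H/∂qᵢ`. -/
noncomputable def poissonBracket [DecidableEq ι] (P : ℝ × ℝ → ℝ)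
    (H : (ι → ℝ) × (ι → ℝ) × E → ℝ) (i : ι) (x : (ι → ℝ) × (ι → ℝ) × E) : ℝ :=
  fderiv ℝ P (x.1 i, x.2.1 i) (0, 1) * fderiv ℝ H x (Pi.single i 1, 0, 0) -
    fderiv ℝ P (x.1 i, x.2.1 i) (1, 0) * fderiv ℝ H x (0, Pi.single i 1, 0)

variable [Fintype ι] {p q p' q' : ι → ℝ → ℝ} {H : (ι → ℝ) × (ι → ℝ) × E → ℝ} {c : ℝ → E}
  {lam B C K : ℝ}

lemma integrable_and_hasFDerivAt_melnikovPotentialAlong (hlam : 0 < lam) (hK : 0 ≤ K)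
    (hp : ∀ i s, HasDerivAt (p i) (p' i s) s) (hq : ∀ i s, HasDerivAt (q i) (q' i s) s)
    (hp'_cont : ∀ i, Continuous (p' i)) (hq'_cont : ∀ i, Continuous (q' i))
    (hp' : ∀ i s, |p' i s| ≤ B * Real.exp (-lam * |s|))
    (hq' : ∀ i s, |q' i s| ≤ B * Real.exp (-lam * |s|))
    (hdecay : ∀ i s, |p i s| + dist (q i s : UnitAddCircle) 0 ≤ C * Real.exp (-lam * |s|))
    (hH : ContDiff ℝ 1 H) (hHlip : PendulumLipschitz K H) (hc : Continuous c) (τ : ι → ℝ) :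
    Integrable (fun σ => (fderiv ℝ H (shiftedOrbit p q c τ σ)).comp
      (shiftedOrbitDeriv E p' q' τ σ)) ∧
    HasFDerivAt (melnikovPotentialAlong p q H c)
      (-∫ σ, (fderiv ℝ H (shiftedOrbit p q c τ σ)).comp (shiftedOrbitDeriv E p' q' τ σ)) τ := by
  classical
  have h_orbit : ∀ τ, Continuous (shiftedOrbit p q c τ) := continuous_shiftedOrbit
    (fun i => continuous_iff_continuousAt.2 fun s => (hp i s).continuousAt)
    (fun i => continuous_iff_continuousAt.2 fun s => (hq i s).continuousAt) hc
  have hF_cont : ∀ τ, Continuous fun σ => H (shiftedOrbit p q c τ σ) - H (0, 0, c σ) := fun τ =>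
    (hH.continuous.comp (h_orbit τ)).sub (hH.continuous.comp (by fun_prop))
  have hF_int := (integrable_const_mul_sum_exp hlam _ τ).mono' (hF_cont τ).aestronglyMeasurable
    (.of_forall (hHlip.abs_sub_shiftedOrbit_le hK hdecay c τ))
  have hF'_meas := (continuous_comp_shiftedOrbitDeriv hp'_cont hq'_cont
    ((hH.continuous_fderiv one_ne_zero).comp (h_orbit τ)) τ).aestronglyMeasurable (μ := volume)
  have hdiff := hH.differentiable one_ne_zero
  have hF'_bound (τ : ι → ℝ) (σ : ℝ) := norm_comp_shiftedOrbitDeriv_le hp' hq'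
    (hHlip.abs_fderiv_momentum_le hK hdiff (shiftedOrbit p q c τ σ))
    (hHlip.abs_fderiv_angle_le hK hdiff _) τ σ
  have hF' (τ : ι → ℝ) (σ : ℝ) := ((hdiff (shiftedOrbit p q c τ σ)).hasFDerivAt.comp τ
    (hasFDerivAt_shiftedOrbit hp hq c τ σ)).sub_const (H (0, 0, c σ))
  exact ⟨(integrable_const_mul_sum_exp hlam _ τ).mono' hF'_meas (.of_forall (hF'_bound τ)),
    (hasFDerivAt_integral_of_norm_fderiv_le_sum_exp hlam
      (fun τ' => (hF_cont τ').aestronglyMeasurable) hF_int hF'_meas hF'_bound hF').neg⟩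

variable [DecidableEq ι]

theorem melnikovPotential_hasDerivAt_tau_general {P : ι → ℝ × ℝ → ℝ} {L : ℝ}
    (hlam : 0 < lam) (hK : 0 ≤ K) (hP : ∀ i, ContDiff ℝ 1 (P i))
    (hP_grad : ∀ i y, ‖fderiv ℝ (P i) y‖ ≤ L * (|y.1| + dist (y.2 : UnitAddCircle) 0))
    (hp : ∀ i s, HasDerivAt (p i) (-fderiv ℝ (P i) (p i s, q i s) (0, 1)) s)
    (hq : ∀ i s, HasDerivAt (q i) (fderiv ℝ (P i) (p i s, q i s) (1, 0)) s)
    (hdecay : ∀ i s, |p i s| + dist (q i s : UnitAddCircle) 0 ≤ C * Real.exp (-lam * |s|))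
    (hH : ContDiff ℝ 1 H) (hHlip : PendulumLipschitz K H) (hc : Continuous c) (τ : ι → ℝ) :
    Differentiable ℝ (melnikovPotentialAlong p q H c) ∧
    ∀ i, Integrable (fun σ => poissonBracket (P i) H i (shiftedOrbit p q c τ σ)) ∧
      HasDerivAt (fun s => melnikovPotentialAlong p q H c (Function.update τ i s))
        (∫ σ, poissonBracket (P i) H i (shiftedOrbit p q c τ σ)) (τ i) := by
  have h_grad_cont (i : ι) : Continuous fun s => fderiv ℝ (P i) (p i s, q i s) :=
    ((hP i).continuous_fderiv one_ne_zero).comp <| continuous_iff_continuousAt.2 fun s =>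
      (hp i s).continuousAt.prodMk (hq i s).continuousAt
  have hL (i : ι) : 0 ≤ L := by simpa using (norm_nonneg _).trans (hP_grad i (1, 0))
  have h_velocity (i : ι) (s : ℝ) {v : ℝ × ℝ} (hv : ‖v‖ ≤ 1) :
      |fderiv ℝ (P i) (p i s, q i s) v| ≤ L * C * Real.exp (-lam * |s|) := calc
    |fderiv ℝ (P i) (p i s, q i s) v| ≤ ‖fderiv ℝ (P i) (p i s, q i s)‖ :=
      (fderiv ℝ (P i) (p i s, q i s)).unit_le_opNorm v hv
    _ ≤ L * (|p i s| + dist (q i s : UnitAddCircle) 0) := hP_grad i _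
    _ ≤ L * (C * Real.exp (-lam * |s|)) := by
          have := hL i
          gcongr
          exact hdecay i s
    _ = L * C * Real.exp (-lam * |s|) := (mul_assoc ..).symm
  have h_deriv := integrable_and_hasFDerivAt_melnikovPotentialAlong hlam hK hp hq
    (fun i => by fun_prop) (fun i => by fun_prop)
    (fun i s => by simpa only [abs_neg] using h_velocity i s (v := (0, 1)) (by simp))
    (fun i s => h_velocity i s (v := (1, 0)) (by simp)) hdecay hH hHlip hc
  obtain ⟨h_int, h_fderiv⟩ := h_deriv τ
  refine ⟨fun τ' => (h_deriv τ').2.differentiableAt, fun i => ?_⟩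
  have h_bracket (σ : ℝ) : poissonBracket (P i) H i (shiftedOrbit p q c τ σ) =
      -((fderiv ℝ H (shiftedOrbit p q c τ σ)).comp (shiftedOrbitDeriv E
        (fun i s => -fderiv ℝ (P i) (p i s, q i s) (0, 1))
        (fun i s => fderiv ℝ (P i) (p i s, q i s) (1, 0)) τ σ)) (Pi.single i 1) := by
    rw [ContinuousLinearMap.comp_apply, shiftedOrbitDeriv_single, map_add, map_smul, map_smul,
      smul_eq_mul, smul_eq_mul, poissonBracket, neg_mul, neg_add, neg_neg, ← sub_eq_add_neg]
    rfl
  simp only [h_bracket]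
  refine ⟨(h_int.apply_continuousLinearMap _).neg, ?_⟩
  rw [integral_neg, ← ContinuousLinearMap.integral_apply h_int]
  exact h_fderiv.comp_hasDerivAt_of_eq (τ i) (hasDerivAt_update τ i (τ i))
    (Function.update_eq_self i τ).symm

end MelnikovPotential

section PendulumHamiltonian

/-- The Hamiltonian `s(p²/2 + V(q))` of a pendulum, as a function of `(p, q)`. -/
noncomputable def pendulumHamiltonian (s : ℝ) (V : ℝ → ℝ) (y : ℝ × ℝ) : ℝ :=
  s * (y.1 ^ 2 / 2 + V y.2)

variable {s : ℝ} {V V' : ℝ → ℝ}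

lemma hasFDerivAt_pendulumHamiltonian (hV : ∀ x, HasDerivAt V (V' x) x) (y : ℝ × ℝ) :
    HasFDerivAt (pendulumHamiltonian s V)
      (s • (y.1 • ContinuousLinearMap.fst ℝ ℝ ℝ + V' y.2 • ContinuousLinearMap.snd ℝ ℝ ℝ)) y := by
  have h_kinetic : HasDerivAt (fun a : ℝ => a ^ 2 / 2) y.1 y.1 := by
    simpa using (hasDerivAt_pow 2 y.1).div_const 2
  exact ((h_kinetic.comp_hasFDerivAt y hasFDerivAt_fst).add
    ((hV y.2).comp_hasFDerivAt y hasFDerivAt_snd)).const_mul s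

lemma fderiv_pendulumHamiltonian (hV : ∀ x, HasDerivAt V (V' x) x) (y v : ℝ × ℝ) :
    fderiv ℝ (pendulumHamiltonian s V) y v = s * (y.1 * v.1 + V' y.2 * v.2) := by
  rw [(hasFDerivAt_pendulumHamiltonian hV y).fderiv]
  rfl

lemma contDiff_pendulumHamiltonian (hV : ∀ x, HasDerivAt V (V' x) x) (hV' : Continuous V') :
    ContDiff ℝ 1 (pendulumHamiltonian s V) := by
  have hV_contDiff : ContDiff ℝ 1 V := contDiff_one_iff_deriv.2
    ⟨fun x => (hV x).differentiableAt, by rwa [funext fun x => (hV x).deriv]⟩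
  unfold pendulumHamiltonian
  fun_prop

lemma periodic_deriv_of_periodic {T : ℝ} (hV : ∀ x, HasDerivAt V (V' x) x)
    (hper : Function.Periodic V T) : Function.Periodic V' T := fun x =>
  ((funext hper : (fun y => V (y + T)) = V) ▸ (hV (x + T)).comp_add_const x T).unique (hV x)

lemma abs_le_mul_dist_coe_zero {f : ℝ → ℝ} {L : NNReal} (hper : Function.Periodic f 1)
    (hzero : f 0 = 0) (hlip : LipschitzWith L f) (x : ℝ) :
    |f x| ≤ L * dist (x : UnitAddCircle) 0 := by
  have hround : f (round x) = 0 := by simpa [hzero] using hper.int_mul (round x) 0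
  simpa [Real.dist_eq, hround, UnitAddCircle.norm_eq] using hlip.dist_le_mul x (round x)

lemma norm_fderiv_pendulumHamiltonian_le {L : NNReal} (hV : ∀ x, HasDerivAt V (V' x) x)
    (hper : Function.Periodic V 1) (hzero : V' 0 = 0) (hlip : LipschitzWith L V') (y : ℝ × ℝ) :
    ‖fderiv ℝ (pendulumHamiltonian s V) y‖ ≤
      |s| * (1 + L) * (|y.1| + dist (y.2 : UnitAddCircle) 0) := by
  have hforce := abs_le_mul_dist_coe_zero (periodic_deriv_of_periodic hV hper) hzero hlip y.2
  refine ContinuousLinearMap.opNorm_le_bound _ (by positivity) fun v => ?_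
  calc ‖fderiv ℝ (pendulumHamiltonian s V) y v‖
      ≤ |s| * (|y.1| * |v.1| + |V' y.2| * |v.2|) := by
        rw [fderiv_pendulumHamiltonian hV, Real.norm_eq_abs, abs_mul s, ← abs_mul y.1,
          ← abs_mul (V' y.2)]
        exact mul_le_mul_of_nonneg_left (abs_add_le _ _) (abs_nonneg s)
    _ ≤ |s| * (|y.1| * ‖v‖ + L * dist (y.2 : UnitAddCircle) 0 * ‖v‖) := by
        gcongr
        exacts [norm_fst_le v, norm_snd_le v]
    _ ≤ |s| * (1 + L) * (|y.1| + dist (y.2 : UnitAddCircle) 0) * ‖v‖ := by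
        rw [← add_mul, mul_assoc |s|, mul_assoc |s|]
        gcongr
        nlinarith [abs_nonneg y.1, L.coe_nonneg, dist_nonneg (x := (y.2 : UnitAddCircle)) (y := 0)]

lemma poissonBracket_pendulumHamiltonian {ι E : Type*} [DecidableEq ι]
    [NormedAddCommGroup E] [NormedSpace ℝ E] (hV : ∀ x, HasDerivAt V (V' x) x)
    (H : (ι → ℝ) × (ι → ℝ) × E → ℝ) (i : ι) (x : (ι → ℝ) × (ι → ℝ) × E) :
    poissonBracket (pendulumHamiltonian s V) H i x =
      s * V' (x.2.1 i) * fderiv ℝ H x (Pi.single i 1, 0, 0) -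
        s * x.1 i * fderiv ℝ H x (0, Pi.single i 1, 0) := by
  simp only [poissonBracket, fderiv_pendulumHamiltonian hV, mul_zero, mul_one, zero_add, add_zero]

end PendulumHamiltonian

/-- the Melnikov potential is differentiable in `τ`, and
`∂𝓜̃/∂τᵢ(τ,I,φ,t) = ∫ [P_i,h](p⁰(τ+σ1̄), q⁰(τ+σ1̄), I, φ+σω(I), t+σ) dσ`,
the integral being absolutely convergent. Here
`[P_i,h] = s_i V_i′(q_i)·∂h/∂p_i − s_i p_i·∂h/∂q_i`. -/
theorem melnikovPotential_hasDerivAt_tau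
    {n d : ℕ} (hn : 1 ≤ n) (hd : 1 ≤ d)
    (lam C0 K LV : ℝ) (hlam : 0 < lam) (hC0 : 0 < C0) (hK : 0 < K) (hLV : 0 < LV)
    (V V' : Fin n → ℝ → ℝ)
    (hV : ∀ i x, HasDerivAt (V i) (V' i x) x)
    (hVper : ∀ i, Function.Periodic (V i) 1)
    (hV'0 : ∀ i, V' i 0 = 0)
    (hV'lip : ∀ i, LipschitzWith (Real.toNNReal LV) (V' i))
    (sg : Fin n → ℝ) (hsg : ∀ i, sg i = 1 ∨ sg i = -1)
    (p0 qt0 : Fin n → ℝ → ℝ)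
    (hqode : ∀ i s, HasDerivAt (qt0 i) (sg i * p0 i s) s)
    (hpode : ∀ i s, HasDerivAt (p0 i) (-(sg i * V' i (qt0 i s))) s)
    (hdecay : ∀ i s,
      |p0 i s| + dist ((qt0 i s : ℝ) : AddCircle (1:ℝ)) 0 ≤ C0 * Real.exp (-lam * |s|))
    (H : (Fin n → ℝ) × (Fin n → ℝ) × (Fin d → ℝ) × (Fin d → ℝ) × ℝ → ℝ)
    (hH : ContDiff ℝ 1 H)
    (hHq : ∀ (p q : Fin n → ℝ) (I φ : Fin d → ℝ) (t : ℝ) (i : Fin n),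
      H (p, Function.update q i (q i + 1), I, φ, t) = H (p, q, I, φ, t))
    (hHφ : ∀ (p q : Fin n → ℝ) (I φ : Fin d → ℝ) (t : ℝ) (j : Fin d),
      H (p, q, I, Function.update φ j (φ j + 1), t) = H (p, q, I, φ, t))
    (hHlip : ∀ (p q p' q' : Fin n → ℝ) (I φ : Fin d → ℝ) (t : ℝ),
      |H (p, q, I, φ, t) - H (p', q', I, φ, t)| ≤
        K * ((∑ i, |p i - p' i|) +
          ∑ i, dist ((q i : ℝ) : AddCircle (1:ℝ)) ((q' i : ℝ) : AddCircle (1:ℝ))))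
    (hHpbd : ∀ x (i : Fin n), |fderiv ℝ H x ((Pi.single i 1 : Fin n → ℝ), 0, 0, 0, 0)| ≤ K)
    (hHqbd : ∀ x (i : Fin n), |fderiv ℝ H x (0, (Pi.single i 1 : Fin n → ℝ), 0, 0, 0)| ≤ K)
    (ω : (Fin d → ℝ) → Fin d → ℝ)
    (τ : Fin n → ℝ) (I : Fin d → ℝ) (φ : Fin d → ℝ) (t : ℝ) :
    Differentiable ℝ
      (fun τ' : Fin n → ℝ => melnikovPotentialLift p0 qt0 H ω τ' I φ t) ∧
    ∀ i : Fin n,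
      Integrable (fun σ : ℝ =>
        (sg i * V' i (qt0 i (τ i + σ))) *
            (fderiv ℝ H
              (fun k => p0 k (τ k + σ), fun k => qt0 k (τ k + σ), I,
               (fun j => φ j + σ * ω I j), t + σ)
              ((Pi.single i 1 : Fin n → ℝ), 0, 0, 0, 0))
          - (sg i * p0 i (τ i + σ)) *
            (fderiv ℝ H
              (fun k => p0 k (τ k + σ), fun k => qt0 k (τ k + σ), I,
               (fun j => φ j + σ * ω I j), t + σ)
              (0, (Pi.single i 1 : Fin n → ℝ), 0, 0, 0))) ∧
      HasDerivAt
        (fun s : ℝ =>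
          melnikovPotentialLift p0 qt0 H ω (Function.update τ i s) I φ t)
        (∫ σ : ℝ,
          ((sg i * V' i (qt0 i (τ i + σ))) *
              (fderiv ℝ H
                (fun k => p0 k (τ k + σ), fun k => qt0 k (τ k + σ), I,
                 (fun j => φ j + σ * ω I j), t + σ)
                ((Pi.single i 1 : Fin n → ℝ), 0, 0, 0, 0))
            - (sg i * p0 i (τ i + σ)) *
              (fderiv ℝ H
                (fun k => p0 k (τ k + σ), fun k => qt0 k (τ k + σ), I,
                 (fun j => φ j + σ * ω I j), t + σ)
                (0, (Pi.single i 1 : Fin n → ℝ), 0, 0, 0))))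
        (τ i) := by
  have h_abs_sg (i) : |sg i| = 1 := by rcases hsg i with h | h <;> simp [h]
  have h_melnikov := melnikovPotential_hasDerivAt_tau_general
    (P := fun i => pendulumHamiltonian (sg i) (V i)) (L := 1 + LV.toNNReal)
    (c := fun σ => (I, (fun j => φ j + σ * ω I j), t + σ)) hlam hK.le
    (fun i => contDiff_pendulumHamiltonian (hV i) (hV'lip i).continuous)
    (fun i y => by
      simpa only [h_abs_sg, one_mul] using
        norm_fderiv_pendulumHamiltonian_le (s := sg i) (hV i) (hVper i) (hV'0 i) (hV'lip i) y)
    (fun i s => by simpa [fderiv_pendulumHamiltonian (hV i)] using hpode i s)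
    (fun i s => by simpa [fderiv_pendulumHamiltonian (hV i)] using hqode i s)
    hdecay hH (fun p q p' q' z => hHlip p q p' q' z.1 z.2.1 z.2.2) (by fun_prop) τ
  simp only [poissonBracket_pendulumHamiltonian (hV _)] at h_melnikov
  exact h_melnikov
end

section
/- (Lemma 3.1, made precise.) Fix i ∈ {1,…,n}, I ∈ ℝᵈ, φ ∈ 𝕋ᵈ and t ∈ 𝕋. Assume that the map ς ↦ 𝓜̃ᵢ(ς, I, φ, t) is differentiable, and that the continuous function (θ, u) ↦ 𝓜̃ᵢ(0, I, θ, u) on 𝕋ᵈ × 𝕋 is not constant on the closure of the orbit { (φ − ςω(I), t − ς) : ς ∈ ℝ } ⊆ 𝕋ᵈ × 𝕋. Then 𝓜̃ᵢ has a critical point with respect to ς: the set { ς* ∈ ℝ : (d/dς) 𝓜̃ᵢ(ς*, I, φ, t) = 0 } is nonempty; in fact it is unbounded above and unbounded below. -/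
/-!
Translating the integration variable gives `𝓜̃ᵢ(ς, I, φ, t) = F (φ - ςω(I), t - ς)`, so the
potential is a continuous function read along an orbit of a one-parameter subgroup of a compact
group. Such a function is recurrent: each of its values is a cluster point of it at `+∞` and `-∞`.

If its derivative had no zero on `(b, ∞)`, then by Darboux's theorem the function would be monotone
on `[b, ∞)`. A recurrent function that is monotone near `+∞` is constant, since a value once left
behind is never approached again; then `F` would be constant on the closure of the orbit.
-/

open MeasureTheory

/-- The `i`-th partial Melnikov potential, in which only the `i`-th pendulum coordinates
are nonzero. -/
noncomputable def partialMelnikov {n d : ℕ} (i : Fin n)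
    (p0 : Fin n → ℝ → ℝ) (q0 : Fin n → ℝ → AddCircle (1:ℝ))
    (h : (Fin n → ℝ) → (Fin n → AddCircle (1:ℝ)) → (Fin d → ℝ) →
      (Fin d → AddCircle (1:ℝ)) → ℝ → ℝ)
    (ω : (Fin d → ℝ) → Fin d → ℝ)
    (ς : ℝ) (I : Fin d → ℝ) (φ : Fin d → AddCircle (1:ℝ)) (t : ℝ) : ℝ :=
  -∫ σ : ℝ,
    (h (Pi.single i (p0 i (ς + σ))) (Pi.single i (q0 i (ς + σ))) I
        (fun j => φ j + ((σ * ω I j : ℝ) : AddCircle (1:ℝ))) (t + σ)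
      - h 0 0 I (fun j => φ j + ((σ * ω I j : ℝ) : AddCircle (1:ℝ))) (t + σ))

open Filter Set

lemma eq_of_monotoneOn_Ici_of_mapClusterPt {α β : Type*} [Preorder α] [PartialOrder β]
    [TopologicalSpace β] [OrderClosedTopology β] {g : α → β} {b : α}
    (hmono : MonotoneOn g (Ici b)) (hrec : ∀ s, MapClusterPt (g s) atTop g) (s : α) :
    g s = g b := by
  have le_of_mem : ∀ t ∈ Ici b, ∀ u, g t ≤ g u := fun t ht u =>
    isClosed_Ici.mem_of_mapClusterPt (hrec u) <|
      (eventually_ge_atTop t).mono fun _ hv => hmono ht (le_trans ht hv) hv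
  have ge : g s ≤ g b :=
    isClosed_Iic.mem_of_mapClusterPt (hrec s) <|
      (eventually_ge_atTop b).mono fun t ht => le_of_mem t ht b
  exact ge.antisymm (le_of_mem b self_mem_Ici s)

lemma monotoneOn_or_antitoneOn_Ici_of_deriv_ne_zero {g : ℝ → ℝ} {b : ℝ}
    (hg : Differentiable ℝ g) (hne : ∀ s ∈ Ioi b, deriv g s ≠ 0) :
    MonotoneOn g (Ici b) ∨ AntitoneOn g (Ici b) := by
  rcases hasDerivWithinAt_forall_lt_or_forall_gt_of_forall_ne (convex_Ioi b)
    (fun s _ => (hg s).hasDerivAt.hasDerivWithinAt) hne with hneg | hpos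
  · exact .inr (strictAntiOn_of_deriv_neg (convex_Ici b) hg.continuous.continuousOn
      (by rwa [interior_Ici])).antitoneOn
  · exact .inl (strictMonoOn_of_deriv_pos (convex_Ici b) hg.continuous.continuousOn
      (by rwa [interior_Ici])).monotoneOn

lemma frequently_atTop_deriv_eq_zero_of_mapClusterPt {g : ℝ → ℝ} (hg : Differentiable ℝ g)
    (hrec : ∀ s, MapClusterPt (g s) atTop g) (hnc : ¬ ∃ c, ∀ s, g s = c) :
    ∃ᶠ s in atTop, deriv g s = 0 := by
  refine frequently_atTop'.2 fun b => ?_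
  by_contra! hne
  rcases monotoneOn_or_antitoneOn_Ici_of_deriv_ne_zero hg hne with hmono | hanti
  · exact hnc ⟨g b, eq_of_monotoneOn_Ici_of_mapClusterPt hmono hrec⟩
  · exact hnc ⟨g b, eq_of_monotoneOn_Ici_of_mapClusterPt (β := ℝᵒᵈ) hanti.dual_right hrec⟩

section CompactGroup

variable {G : Type*} [AddGroup G] [TopologicalSpace G] [IsTopologicalAddGroup G] [CompactSpace G]

lemma mapClusterPt_atTop_addMonoidHom {R : Type*} [Ring R] [PartialOrder R] [IsOrderedRing R]
    [Archimedean R] (γ : R →+ G) (s : R) : MapClusterPt (γ s) atTop γ := by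
  have hzero : MapClusterPt 0 atTop fun m : ℕ => m • γ 1 := mapClusterPt_zero_atTop_nsmul (γ 1)
  have hs : MapClusterPt (γ s) atTop fun m : ℕ => γ (s + m) := by
    simpa [Function.comp_def, ← map_nsmul] using
      hzero.continuousAt_comp (f := (γ s + ·)) (by fun_prop)
  exact hs.of_comp (tendsto_atTop_add_const_left _ s tendsto_natCast_atTop_atTop)

variable {F : G → ℝ} {x : G} {γ : ℝ →+ G}

lemma frequently_atTop_deriv_orbit_eq_zero (hF : Continuous F)
    (hdiff : Differentiable ℝ fun s => F (x + γ s)) (hnc : ¬ ∃ c, ∀ s, F (x + γ s) = c) :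
    ∃ᶠ s in atTop, deriv (fun s => F (x + γ s)) s = 0 := by
  have hFx : Continuous fun y => F (x + y) := by fun_prop
  exact frequently_atTop_deriv_eq_zero_of_mapClusterPt hdiff
    (fun s => (mapClusterPt_atTop_addMonoidHom γ s).continuousAt_comp
      (f := fun y => F (x + y)) hFx.continuousAt) hnc

lemma frequently_atBot_deriv_orbit_eq_zero (hF : Continuous F)
    (hdiff : Differentiable ℝ fun s => F (x + γ s)) (hnc : ¬ ∃ c, ∀ s, F (x + γ s) = c) :
    ∃ᶠ s in atBot, deriv (fun s => F (x + γ s)) s = 0 := by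
  have hreflected : ∃ᶠ s in atTop, deriv (fun s => F (x + γ (-s))) s = 0 :=
    frequently_atTop_deriv_orbit_eq_zero (γ := γ.comp (-AddMonoidHom.id ℝ)) hF
      (hdiff.comp differentiable_neg) fun ⟨c, hc⟩ => hnc ⟨c, fun s => by simpa using hc (-s)⟩
  refine tendsto_neg_atTop_atBot.frequently (hreflected.mono fun s hs => ?_)
  rwa [deriv_comp_neg (fun s => F (x + γ s)), neg_eq_zero] at hs

end CompactGroup

/-- The one-parameter subgroup `s ↦ (sv, s)` of `𝕋ᵈ × 𝕋`: its translates are the trajectories of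
angles with frequency vector `v`, paired with the time modulo `1`. -/
def linearFlow {ι : Type*} (v : ι → ℝ) : ℝ →+ (ι → AddCircle (1 : ℝ)) × AddCircle (1 : ℝ) where
  toFun s := (fun j => ((s * v j : ℝ) : AddCircle (1 : ℝ)), (s : AddCircle (1 : ℝ)))
  map_zero' := by ext <;> simp
  map_add' s s' := by ext <;> simp [add_mul]

lemma add_neg_linearFlow {ι : Type*} (v : ι → ℝ) (φ : ι → AddCircle (1 : ℝ)) (t s : ℝ) :
    (φ, (t : AddCircle (1 : ℝ))) + (-linearFlow v) s =
      (fun j => φ j - ((s * v j : ℝ) : AddCircle (1 : ℝ)), ((t - s : ℝ) : AddCircle (1 : ℝ))) :=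
  (sub_eq_add_neg _ (linearFlow v s)).symm

section Melnikov

variable {n d : ℕ} (p0 : Fin n → ℝ → ℝ) (q0 : Fin n → ℝ → AddCircle (1 : ℝ))
  (h : (Fin n → ℝ) → (Fin n → AddCircle (1 : ℝ)) → (Fin d → ℝ) →
    (Fin d → AddCircle (1 : ℝ)) → ℝ → ℝ)
  (ω : (Fin d → ℝ) → Fin d → ℝ) (i : Fin n) (I : Fin d → ℝ) (φ : Fin d → AddCircle (1 : ℝ)) (t : ℝ)

lemma partialMelnikov_eq_partialMelnikov_zero (ς : ℝ) :
    partialMelnikov i p0 q0 h ω ς I φ t =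
      partialMelnikov i p0 q0 h ω 0 I
        (fun j => φ j - ((ς * ω I j : ℝ) : AddCircle (1 : ℝ))) (t - ς) := by
  refine congrArg Neg.neg (Eq.trans ?_ (integral_add_right_eq_self _ ς))
  simp only [add_mul, AddCircle.coe_add, sub_add_add_cancel, zero_add, add_comm ς]

-- Where its integral diverges the potential has the junk value `0`. Translating the integration
-- variable shows that convergence is the same at all points of an orbit, so in the divergent case
-- `F` is `0` on the closure of the orbit.
theorem partialMelnikov_has_critical_points_general
    (hdiff : Differentiable ℝ (fun ς => partialMelnikov i p0 q0 h ω ς I φ t))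
    (F : (Fin d → AddCircle (1 : ℝ)) × AddCircle (1 : ℝ) → ℝ) (hFcont : Continuous F)
    (hF : ∀ (θ : Fin d → AddCircle (1 : ℝ)) (u : ℝ),
      F (θ, (u : AddCircle (1 : ℝ))) = partialMelnikov i p0 q0 h ω 0 I θ u)
    (hnc : ¬ ∃ c : ℝ, ∀ x ∈ closure (range fun ς : ℝ =>
        ((fun j => φ j - ((ς * ω I j : ℝ) : AddCircle (1 : ℝ))),
          ((t - ς : ℝ) : AddCircle (1 : ℝ)))), F x = c) :
    {ς : ℝ | deriv (fun ς' => partialMelnikov i p0 q0 h ω ς' I φ t) ς = 0}.Nonempty ∧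
    ¬ BddAbove {ς : ℝ | deriv (fun ς' => partialMelnikov i p0 q0 h ω ς' I φ t) ς = 0} ∧
    ¬ BddBelow {ς : ℝ | deriv (fun ς' => partialMelnikov i p0 q0 h ω ς' I φ t) ς = 0} := by
  have hpotential : (fun ς => partialMelnikov i p0 q0 h ω ς I φ t) =
      fun ς => F ((φ, (t : AddCircle (1 : ℝ))) + (-linearFlow (ω I)) ς) := by
    funext ς
    rw [partialMelnikov_eq_partialMelnikov_zero, add_neg_linearFlow, hF]
  have hnc_orbit : ¬ ∃ c, ∀ ς, F ((φ, (t : AddCircle (1 : ℝ))) + (-linearFlow (ω I)) ς) = c := by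
    simp only [add_neg_linearFlow]
    exact fun ⟨c, hc⟩ => hnc ⟨c, EqOn.closure (forall_mem_range.2 hc) hFcont continuous_const⟩
  rw [hpotential] at hdiff ⊢
  have htop := frequently_atTop_deriv_orbit_eq_zero hFcont hdiff hnc_orbit
  have hbot := frequently_atBot_deriv_orbit_eq_zero hFcont hdiff hnc_orbit
  exact ⟨htop.exists,
    not_bddAbove_iff.2 fun b => (frequently_atTop'.1 htop b).imp fun _ => And.symm,
    not_bddBelow_iff.2 fun b => (frequently_atBot'.1 hbot b).imp fun _ => And.symm⟩

end Melnikov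

/-- Lemma 3.1, made precise: if the partial Melnikov potential, regarded
through its descent `F` to `𝕋ᵈ × 𝕋`, is not constant on the closure of the orbit
`{(φ − ςω(I), t − ς)}`, then `ς ↦ 𝓜̃ᵢ(ς, I, φ, t)` has critical points, and the set of
critical points is unbounded above and below. -/
theorem partialMelnikov_has_critical_points
    {n d : ℕ} (hn : 1 ≤ n) (hd : 1 ≤ d)
    (lam C0 K : ℝ) (hlam : 0 < lam) (hC0 : 0 < C0) (hK : 0 < K)
    (p0 : Fin n → ℝ → ℝ) (q0 : Fin n → ℝ → AddCircle (1:ℝ))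
    (hp0 : ∀ i, Continuous (p0 i)) (hq0 : ∀ i, Continuous (q0 i))
    (hdecay : ∀ i s, |p0 i s| + dist (q0 i s) 0 ≤ C0 * Real.exp (-lam * |s|))
    (h : (Fin n → ℝ) → (Fin n → AddCircle (1:ℝ)) → (Fin d → ℝ) →
      (Fin d → AddCircle (1:ℝ)) → ℝ → ℝ)
    (hcont : Continuous fun x : (Fin n → ℝ) × (Fin n → AddCircle (1:ℝ)) × (Fin d → ℝ) ×
        (Fin d → AddCircle (1:ℝ)) × ℝ => h x.1 x.2.1 x.2.2.1 x.2.2.2.1 x.2.2.2.2)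
    (hLip : ∀ p q p' q' I φ t, |h p q I φ t - h p' q' I φ t| ≤
      K * ((∑ i, |p i - p' i|) + ∑ i, dist (q i) (q' i)))
    (htper : ∀ p q I φ t, h p q I φ (t + 1) = h p q I φ t)
    (ω : (Fin d → ℝ) → Fin d → ℝ)
    (i : Fin n) (I : Fin d → ℝ) (φ : Fin d → AddCircle (1:ℝ)) (t : ℝ)
    (hdiff : Differentiable ℝ (fun ς => partialMelnikov i p0 q0 h ω ς I φ t))
    -- `F` is the (continuous) descent of `(θ, u) ↦ 𝓜̃ᵢ(0, I, θ, u)` to `𝕋ᵈ × 𝕋`: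
    (F : (Fin d → AddCircle (1:ℝ)) × AddCircle (1:ℝ) → ℝ)
    (hFcont : Continuous F)
    (hF : ∀ (θ : Fin d → AddCircle (1:ℝ)) (u : ℝ),
      F (θ, (u : AddCircle (1:ℝ))) = partialMelnikov i p0 q0 h ω 0 I θ u)
    -- `F` is not constant on the closure of the orbit `{(φ − ςω(I), t − ς) : ς ∈ ℝ}`:
    (hnc : ¬ ∃ c : ℝ, ∀ x ∈ closure (Set.range fun ς : ℝ =>
        ((fun j => φ j - ((ς * ω I j : ℝ) : AddCircle (1:ℝ))),
          ((t - ς : ℝ) : AddCircle (1:ℝ)))), F x = c) :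
    {ς : ℝ | deriv (fun ς' => partialMelnikov i p0 q0 h ω ς' I φ t) ς = 0}.Nonempty ∧
    ¬ BddAbove {ς : ℝ | deriv (fun ς' => partialMelnikov i p0 q0 h ω ς' I φ t) ς = 0} ∧
    ¬ BddBelow {ς : ℝ | deriv (fun ς' => partialMelnikov i p0 q0 h ω ς' I φ t) ς = 0} :=
  partialMelnikov_has_critical_points_general p0 q0 h ω i I φ t hdiff F hFcont hF hnc
end

section
/- (Lemma 3.2.) For every υ > 0 there exists ΔT > 0 such that for every τ = (τ₁,…,τ_n) ∈ ℝⁿ with τ_{i+1} − τ_i > ΔT for all i = 1,…,n−1, and every (I, φ, t) ∈ ℝᵈ × 𝕋ᵈ × ℝ, one has |𝓜̃(τ₁,…,τ_n, I, φ, t) − ( 𝓜̃₁(τ₁, I, φ, t) + ⋯ + 𝓜̃_n(τ_n, I, φ, t) )| < υ; i.e. when the phases of the penduli are widely separated, the Melnikov potential is approximately the sum of the partial Melnikov potentials of the individual penduli. -/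
/-!
Since the phases are more than `ΔT` apart, at each time `σ` at most one pendulum, say the `k`-th,
has `|τ k + σ| < ΔT / 2`. Call the *excursion* of a pendulum the sum of its `p`- and `q`-distances
from the saddle. By the Lipschitz property, the integrand of the full potential differs from that of
the `k`-th partial one by at most `K` times the sum of the excursions of the other penduli, and the
integrands of the other partial potentials add up to no more than that. All these penduli have
`|τ j + σ| ≥ ΔT / 2`, so integrating over `σ` bounds the error by `2 K` times the sum of the
integrals of the excursions over `|s| ≥ ΔT / 2`. These are tails of convergent integrals that do not
depend on `τ`, `I`, `φ`, `t`.
-/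

open MeasureTheory

/-- The Melnikov potential. -/
noncomputable def melnikovPotential {n d : ℕ}
    (p0 : Fin n → ℝ → ℝ) (q0 : Fin n → ℝ → AddCircle (1:ℝ))
    (h : (Fin n → ℝ) → (Fin n → AddCircle (1:ℝ)) → (Fin d → ℝ) →
      (Fin d → AddCircle (1:ℝ)) → ℝ → ℝ)
    (ω : (Fin d → ℝ) → Fin d → ℝ)
    (τ : Fin n → ℝ) (I : Fin d → ℝ) (φ : Fin d → AddCircle (1:ℝ)) (t : ℝ) : ℝ :=
  -∫ σ : ℝ,
    (h (fun i => p0 i (τ i + σ)) (fun i => q0 i (τ i + σ)) I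
        (fun j => φ j + ((σ * ω I j : ℝ) : AddCircle (1:ℝ))) (t + σ)
      - h 0 0 I (fun j => φ j + ((σ * ω I j : ℝ) : AddCircle (1:ℝ))) (t + σ))

open Filter Topology Metric

section Separated

lemma lt_sub_of_forall_lt_succ_sub {α : Type*} [AddCommGroup α] [LinearOrder α]
    [IsOrderedAddMonoid α] {n : ℕ} {τ : Fin n → α} {D : α} (hD : 0 ≤ D)
    (hτ : ∀ (i : Fin n) (hi : (i : ℕ) + 1 < n), D < τ ⟨(i : ℕ) + 1, hi⟩ - τ i)
    {i j : Fin n} (hij : i < j) : D < τ j - τ i := by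
  have hmono : StrictMono τ := by
    cases n with
    | zero => exact i.elim0
    | succ m =>
      exact Fin.strictMono_iff_lt_succ.2 fun l =>
        sub_pos.1 (hD.trans_lt (hτ l.castSucc (Nat.succ_lt_succ l.isLt)))
  have hi : (i : ℕ) + 1 < n := (Nat.succ_le_of_lt hij).trans_lt j.isLt
  have hle : (⟨(i : ℕ) + 1, hi⟩ : Fin n) ≤ j := Nat.succ_le_of_lt hij
  exact (hτ i hi).trans_le (sub_le_sub_right (hmono.monotone hle) _)

lemma pairwise_le_dist_of_forall_lt_succ_sub {n : ℕ} {τ : Fin n → ℝ} {D : ℝ} (hD : 0 ≤ D)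
    (hτ : ∀ (i : Fin n) (hi : (i : ℕ) + 1 < n), D < τ ⟨(i : ℕ) + 1, hi⟩ - τ i) :
    Pairwise fun i j => D ≤ dist (τ i) (τ j) := by
  have hlt {i j : Fin n} (hij : i < j) : D ≤ dist (τ j) (τ i) :=
    (lt_sub_of_forall_lt_succ_sub hD hτ hij).le.trans (le_abs_self _)
  intro i j hij
  rcases hij.lt_or_gt with h | h
  · exact dist_comm (τ i) (τ j) ▸ hlt h
  · exact hlt h

lemma exists_forall_ne_half_le_dist {ι X : Type*} [Nonempty ι] [PseudoMetricSpace X]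
    {x : ι → X} {D : ℝ} (hx : Pairwise fun i j => D ≤ dist (x i) (x j)) (y : X) :
    ∃ k, ∀ j, j ≠ k → D / 2 ≤ dist (x j) y := by
  by_cases hnear : ∃ k, dist (x k) y < D / 2
  · obtain ⟨k, hk⟩ := hnear
    refine ⟨k, fun j hj => ?_⟩
    linarith [hx hj, dist_triangle_right (x j) (x k) y]
  · push Not at hnear
    exact ⟨Classical.arbitrary ι, fun j _ => hnear j⟩

end Separated

section Integrals

lemma integrable_exp_neg_mul_abs {c : ℝ} (hc : 0 < c) :
    Integrable (fun s : ℝ => Real.exp (-c * |s|)) := by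
  rw [← integrableOn_univ, ← Set.Iic_union_Ioi (a := (0 : ℝ)), integrableOn_union]
  constructor
  · refine (integrableOn_exp_mul_Iic hc 0).congr_fun (fun s hs => ?_) measurableSet_Iic
    simp only [abs_of_nonpos (Set.mem_Iic.1 hs), neg_mul_neg]
  · refine (integrableOn_exp_mul_Ioi (neg_lt_zero.2 hc) 0).congr_fun (fun s hs => ?_)
      measurableSet_Ioi
    simp only [abs_of_pos (Set.mem_Ioi.1 hs)]

lemma integrable_norm_add_dist_of_le_exp {E X : Type*} [SeminormedAddCommGroup E]
    [PseudoMetricSpace X] {p : ℝ → E} {q : ℝ → X} {x : X} {c C : ℝ} (hc : 0 < c)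
    (hp : Continuous p) (hq : Continuous q)
    (hdecay : ∀ s, ‖p s‖ + dist (q s) x ≤ C * Real.exp (-c * |s|)) :
    Integrable fun s => ‖p s‖ + dist (q s) x := by
  refine ((integrable_exp_neg_mul_abs hc).const_mul C).mono'
    (hp.norm.add (hq.dist continuous_const)).aestronglyMeasurable (.of_forall fun s => ?_)
  rw [Real.norm_of_nonneg (by positivity)]
  exact hdecay s

lemma tendsto_setIntegral_compl_ball {X E : Type*} [PseudoMetricSpace X] [MeasurableSpace X]
    [OpensMeasurableSpace X] [NormedAddCommGroup E] [NormedSpace ℝ E] {μ : Measure X} {f : X → E}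
    (hf : Integrable f μ) (x : X) :
    Tendsto (fun R => ∫ y in (ball x R)ᶜ, f y ∂μ) atTop (𝓝 0) := by
  have hball := (aecover_ball (x := x) tendsto_id).integral_tendsto_of_countably_generated hf
  simpa only [setIntegral_compl measurableSet_ball hf, sub_self, id] using
    hball.const_sub (∫ y, f y ∂μ)

variable {ι E : Type*} [Fintype ι] [DecidableEq ι] [NormedAddCommGroup E]

lemma norm_sub_sum_le_two_mul_sum_erase {a : E} {b : ι → E} {c : ι → ℝ} {k : ι}
    (ha : ‖a - b k‖ ≤ ∑ i ∈ Finset.univ.erase k, c i) (hb : ∀ i, ‖b i‖ ≤ c i) :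
    ‖a - ∑ i, b i‖ ≤ 2 * ∑ i ∈ Finset.univ.erase k, c i := by
  calc ‖a - ∑ i, b i‖ = ‖(a - b k) - ∑ i ∈ Finset.univ.erase k, b i‖ := by
        rw [← Finset.add_sum_erase _ b (Finset.mem_univ k), sub_sub]
    _ ≤ ‖a - b k‖ + ‖∑ i ∈ Finset.univ.erase k, b i‖ := norm_sub_le _ _
    _ ≤ ∑ i ∈ Finset.univ.erase k, c i + ∑ i ∈ Finset.univ.erase k, c i :=
        add_le_add ha (norm_sum_le_of_le _ fun i _ => hb i)
    _ = 2 * ∑ i ∈ Finset.univ.erase k, c i := (two_mul _).symm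

variable {V : Type*} [SeminormedAddCommGroup V]

lemma norm_sub_sum_le_sum_indicator_of_separated [Nonempty ι] {τ : ι → V} {D : ℝ}
    (hτ : Pairwise fun i j => D ≤ dist (τ i) (τ j)) {ψ : ι → V → ℝ} {σ : V} {a : E} {b : ι → E}
    (hab : ∀ k, ‖a - b k‖ ≤ ∑ i ∈ Finset.univ.erase k, ψ i (τ i + σ))
    (hb : ∀ i, ‖b i‖ ≤ ψ i (τ i + σ)) :
    ‖a - ∑ i, b i‖ ≤ 2 * ∑ i, (ball 0 (D / 2))ᶜ.indicator (ψ i) (τ i + σ) := by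
  obtain ⟨k, hk⟩ := exists_forall_ne_half_le_dist hτ (-σ)
  refine (norm_sub_sum_le_two_mul_sum_erase (hab k) hb).trans ?_
  gcongr
  calc ∑ i ∈ Finset.univ.erase k, ψ i (τ i + σ)
      = ∑ i ∈ Finset.univ.erase k, (ball 0 (D / 2))ᶜ.indicator (ψ i) (τ i + σ) := by
        refine Finset.sum_congr rfl fun i hi => (Set.indicator_of_mem ?_ _).symm
        simpa [dist_eq_norm] using hk i (Finset.ne_of_mem_erase hi)
    _ ≤ ∑ i, (ball 0 (D / 2))ᶜ.indicator (ψ i) (τ i + σ) :=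
        Finset.sum_le_univ_sum_of_nonneg fun i =>
          Set.indicator_apply_nonneg fun _ => (norm_nonneg _).trans (hb i)

variable [NormedSpace ℝ E] [MeasurableSpace V] [BorelSpace V] {μ : Measure V}
  [μ.IsAddLeftInvariant]

lemma norm_integral_sub_sum_integral_le_of_separated [Nonempty ι] {τ : ι → V} {D : ℝ}
    (hτ : Pairwise fun i j => D ≤ dist (τ i) (τ j)) {F : V → E} {f : ι → V → E} {ψ : ι → V → ℝ}
    (hF : AEStronglyMeasurable F μ) (hf : ∀ i, AEStronglyMeasurable (f i) μ)
    (hψ : ∀ i, Integrable (ψ i) μ)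
    (hFf : ∀ σ k, ‖F σ - f k σ‖ ≤ ∑ i ∈ Finset.univ.erase k, ψ i (τ i + σ))
    (hfψ : ∀ σ i, ‖f i σ‖ ≤ ψ i (τ i + σ)) :
    ‖∫ σ, F σ ∂μ - ∑ i, ∫ σ, f i σ ∂μ‖ ≤ 2 * ∑ i, ∫ s in (ball 0 (D / 2))ᶜ, ψ i s ∂μ := by
  have hψτ : ∀ i, Integrable (fun σ => ψ i (τ i + σ)) μ := fun i => (hψ i).comp_add_left (τ i)
  have hfint : ∀ i, Integrable (f i) μ := fun i =>
    (hψτ i).mono' (hf i) (.of_forall fun σ => hfψ σ i)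
  have hFint : Integrable F μ := by
    obtain ⟨k⟩ := ‹Nonempty ι›
    have hdiff : Integrable (fun σ => F σ - f k σ) μ :=
      (integrable_finsetSum _ fun i _ => hψτ i).mono' (hF.sub (hf k)) (.of_forall fun σ => hFf σ k)
    simpa only [sub_add_cancel] using hdiff.fun_add (hfint k)
  let tail (i : ι) : V → ℝ := (ball 0 (D / 2))ᶜ.indicator (ψ i)
  have htail : ∀ i, Integrable (fun σ => tail i (τ i + σ)) μ := fun i =>
    ((hψ i).indicator measurableSet_ball.compl).comp_add_left (τ i)
  calc ‖∫ σ, F σ ∂μ - ∑ i, ∫ σ, f i σ ∂μ‖ = ‖∫ σ, (F σ - ∑ i, f i σ) ∂μ‖ := by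
        rw [integral_sub hFint (integrable_finsetSum _ fun i _ => hfint i),
          integral_finsetSum _ fun i _ => hfint i]
    _ ≤ ∫ σ, 2 * ∑ i, tail i (τ i + σ) ∂μ :=
        norm_integral_le_of_norm_le ((integrable_finsetSum _ fun i _ => htail i).const_mul 2) <|
          .of_forall fun σ => norm_sub_sum_le_sum_indicator_of_separated hτ (hFf σ) (hfψ σ)
    _ = 2 * ∑ i, ∫ s in (ball 0 (D / 2))ᶜ, ψ i s ∂μ := by
        simp only [integral_const_mul, integral_finsetSum _ fun i _ => htail i,
          integral_add_left_eq_self (tail _), tail, integral_indicator measurableSet_ball.compl]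

end Integrals

section Lipschitz

variable {ι : Type*} [Fintype ι] [DecidableEq ι] {E X : ι → Type*}
  [∀ i, SeminormedAddCommGroup (E i)] [∀ i, PseudoMetricSpace (X i)] [∀ i, Zero (X i)]
  {K : ℝ} {g : (∀ i, E i) → (∀ i, X i) → ℝ}

lemma abs_sub_single_le_of_lipschitz
    (hg : ∀ p q p' q', |g p q - g p' q'| ≤
      K * ((∑ i, ‖p i - p' i‖) + ∑ i, dist (q i) (q' i)))
    (p : ∀ i, E i) (q : ∀ i, X i) (k : ι) :
    |g p q - g (Pi.single k (p k)) (Pi.single k (q k))| ≤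
      ∑ i ∈ Finset.univ.erase k, K * (‖p i‖ + dist (q i) 0) := by
  refine (hg _ _ _ _).trans_eq ?_
  rw [← Finset.mul_sum, ← Finset.sum_add_distrib, ← Finset.add_sum_erase _ _ (Finset.mem_univ k)]
  simp only [Pi.single_eq_same, sub_self, norm_zero, dist_self, add_zero, zero_add]
  congr 1
  refine Finset.sum_congr rfl fun i hi => ?_
  simp only [Pi.single_eq_of_ne (Finset.ne_of_mem_erase hi), sub_zero]

lemma abs_single_sub_zero_le_of_lipschitz
    (hg : ∀ p q p' q', |g p q - g p' q'| ≤
      K * ((∑ i, ‖p i - p' i‖) + ∑ i, dist (q i) (q' i)))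
    (k : ι) (u : E k) (v : X k) :
    |g (Pi.single k u) (Pi.single k v) - g 0 0| ≤ K * (‖u‖ + dist v 0) := by
  refine (hg _ _ _ _).trans_eq ?_
  rw [← Finset.sum_add_distrib, Finset.sum_eq_single k]
  · simp only [Pi.single_eq_same, Pi.zero_apply, sub_zero]
  · intro i _ hi
    simp only [Pi.single_eq_of_ne hi, Pi.zero_apply, sub_zero, norm_zero, dist_self, add_zero]
  · exact fun hk => absurd (Finset.mem_univ k) hk

end Lipschitz

section Melnikov

variable {n d : ℕ} {K : ℝ} {p0 : Fin n → ℝ → ℝ} {q0 : Fin n → ℝ → AddCircle (1 : ℝ)}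
  {h : (Fin n → ℝ) → (Fin n → AddCircle (1 : ℝ)) → (Fin d → ℝ) →
    (Fin d → AddCircle (1 : ℝ)) → ℝ → ℝ}

lemma measurable_comp_linearFlow
    (hmeas : Measurable fun x : (Fin n → ℝ) × (Fin n → AddCircle (1 : ℝ)) × (Fin d → ℝ) ×
        (Fin d → AddCircle (1 : ℝ)) × ℝ => h x.1 x.2.1 x.2.2.1 x.2.2.2.1 x.2.2.2.2)
    {P : ℝ → Fin n → ℝ} {Q : ℝ → Fin n → AddCircle (1 : ℝ)} (hP : Measurable P) (hQ : Measurable Q)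
    (I v : Fin d → ℝ) (φ : Fin d → AddCircle (1 : ℝ)) (t : ℝ) :
    Measurable fun σ : ℝ =>
      h (P σ) (Q σ) I (fun j => φ j + ((σ * v j : ℝ) : AddCircle (1 : ℝ))) (t + σ) := by
  have hflow : Measurable fun (σ : ℝ) j => φ j + ((σ * v j : ℝ) : AddCircle (1 : ℝ)) :=
    measurable_pi_lambda _ fun j =>
      (AddCircle.measurable_mk'.comp (measurable_id.mul_const (v j))).const_add (φ j)
  exact hmeas.comp (hP.prodMk (hQ.prodMk (measurable_const.prodMk
    (hflow.prodMk (measurable_id.const_add t)))))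

lemma abs_melnikovPotential_sub_sum_partialMelnikov_le [Nonempty (Fin n)]
    (hp0 : ∀ i, Measurable (p0 i)) (hq0 : ∀ i, Measurable (q0 i))
    (hexcursion : ∀ i, Integrable fun s => |p0 i s| + dist (q0 i s) 0)
    (hmeas : Measurable fun x : (Fin n → ℝ) × (Fin n → AddCircle (1 : ℝ)) × (Fin d → ℝ) ×
        (Fin d → AddCircle (1 : ℝ)) × ℝ => h x.1 x.2.1 x.2.2.1 x.2.2.2.1 x.2.2.2.2)
    (hLip : ∀ p q p' q' I φ t, |h p q I φ t - h p' q' I φ t| ≤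
      K * ((∑ i, |p i - p' i|) + ∑ i, dist (q i) (q' i)))
    (ω : (Fin d → ℝ) → Fin d → ℝ) {τ : Fin n → ℝ} {D : ℝ}
    (hτ : Pairwise fun i j => D ≤ dist (τ i) (τ j))
    (I : Fin d → ℝ) (φ : Fin d → AddCircle (1 : ℝ)) (t : ℝ) :
    |melnikovPotential p0 q0 h ω τ I φ t - ∑ i, partialMelnikov i p0 q0 h ω (τ i) I φ t| ≤
      2 * ∑ i, ∫ s in (ball 0 (D / 2))ᶜ, K * (|p0 i s| + dist (q0 i s) 0) := by
  have hp : ∀ i, Measurable fun σ => p0 i (τ i + σ) := fun i =>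
    (hp0 i).comp (measurable_const_add (τ i))
  have hq : ∀ i, Measurable fun σ => q0 i (τ i + σ) := fun i =>
    (hq0 i).comp (measurable_const_add (τ i))
  have hrest := measurable_comp_linearFlow hmeas measurable_const measurable_const I (ω I) φ t
    (P := fun _ => 0) (Q := fun _ => 0)
  have hfull := (measurable_comp_linearFlow hmeas (measurable_pi_lambda _ hp)
    (measurable_pi_lambda _ hq) I (ω I) φ t).fun_sub hrest
  have hpartial := fun i => (measurable_comp_linearFlow hmeas
    ((continuous_single i).measurable.comp (hp i)) ((continuous_single i).measurable.comp (hq i))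
    I (ω I) φ t).fun_sub hrest
  simp only [melnikovPotential, partialMelnikov, Finset.sum_neg_distrib, ← neg_sub', abs_neg]
  refine norm_integral_sub_sum_integral_le_of_separated hτ hfull.aestronglyMeasurable
    (fun i => (hpartial i).aestronglyMeasurable) (fun i => (hexcursion i).const_mul K)
    (fun σ k => ?_) (fun σ i => ?_)
  · rw [sub_sub_sub_cancel_right]
    exact abs_sub_single_le_of_lipschitz (fun p q p' q' => hLip p q p' q' _ _ _) _ _ k
  · exact abs_single_sub_zero_le_of_lipschitz (fun p q p' q' => hLip p q p' q' _ _ _) i _ _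

theorem melnikovPotential_approx_sum_of_partials_general (hn : 1 ≤ n)
    (hp0 : ∀ i, Measurable (p0 i)) (hq0 : ∀ i, Measurable (q0 i))
    (hexcursion : ∀ i, Integrable fun s => |p0 i s| + dist (q0 i s) 0)
    (hmeas : Measurable fun x : (Fin n → ℝ) × (Fin n → AddCircle (1 : ℝ)) × (Fin d → ℝ) ×
        (Fin d → AddCircle (1 : ℝ)) × ℝ => h x.1 x.2.1 x.2.2.1 x.2.2.2.1 x.2.2.2.2)
    (hLip : ∀ p q p' q' I φ t, |h p q I φ t - h p' q' I φ t| ≤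
      K * ((∑ i, |p i - p' i|) + ∑ i, dist (q i) (q' i)))
    (ω : (Fin d → ℝ) → Fin d → ℝ) :
    ∀ υ > (0 : ℝ), ∃ ΔT > (0 : ℝ), ∀ τ : Fin n → ℝ,
      (∀ (i : Fin n) (hi : (i : ℕ) + 1 < n), τ ⟨(i : ℕ) + 1, hi⟩ - τ i > ΔT) →
      ∀ (I : Fin d → ℝ) (φ : Fin d → AddCircle (1 : ℝ)) (t : ℝ),
        |melnikovPotential p0 q0 h ω τ I φ t
            - ∑ i : Fin n, partialMelnikov i p0 q0 h ω (τ i) I φ t| < υ := by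
  intro υ hυ
  have : Nonempty (Fin n) := ⟨⟨0, hn⟩⟩
  have htails : Tendsto
      (fun D : ℝ => 2 * ∑ i, ∫ s in (ball 0 (D / 2))ᶜ, K * (|p0 i s| + dist (q0 i s) 0))
      atTop (𝓝 0) := by
    have htail := fun i => (tendsto_setIntegral_compl_ball ((hexcursion i).const_mul K) 0).comp
      (tendsto_id.atTop_div_const two_pos)
    simpa using (tendsto_finsetSum Finset.univ fun i _ => htail i).const_mul 2
  obtain ⟨D, hDυ, hD⟩ := ((htails.eventually_lt_const hυ).and (eventually_gt_atTop 0)).exists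
  refine ⟨D, hD, fun τ hτ I φ t => lt_of_le_of_lt ?_ hDυ⟩
  exact abs_melnikovPotential_sub_sum_partialMelnikov_le hp0 hq0 hexcursion hmeas hLip ω
    (pairwise_le_dist_of_forall_lt_succ_sub hD.le hτ) I φ t

end Melnikov

/-- Lemma 3.2: when the phases of the penduli are widely separated, the
Melnikov potential is approximately the sum of the partial Melnikov potentials. -/
theorem melnikovPotential_approx_sum_of_partials
    {n d : ℕ} (hn : 1 ≤ n) (hd : 1 ≤ d)
    (lam C0 K : ℝ) (hlam : 0 < lam) (hC0 : 0 < C0) (hK : 0 < K)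
    (p0 : Fin n → ℝ → ℝ) (q0 : Fin n → ℝ → AddCircle (1:ℝ))
    (hp0 : ∀ i, Continuous (p0 i)) (hq0 : ∀ i, Continuous (q0 i))
    (hdecay : ∀ i s, |p0 i s| + dist (q0 i s) 0 ≤ C0 * Real.exp (-lam * |s|))
    (h : (Fin n → ℝ) → (Fin n → AddCircle (1:ℝ)) → (Fin d → ℝ) →
      (Fin d → AddCircle (1:ℝ)) → ℝ → ℝ)
    (hcont : Continuous fun x : (Fin n → ℝ) × (Fin n → AddCircle (1:ℝ)) × (Fin d → ℝ) ×
        (Fin d → AddCircle (1:ℝ)) × ℝ => h x.1 x.2.1 x.2.2.1 x.2.2.2.1 x.2.2.2.2)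
    (hLip : ∀ p q p' q' I φ t, |h p q I φ t - h p' q' I φ t| ≤
      K * ((∑ i, |p i - p' i|) + ∑ i, dist (q i) (q' i)))
    (ω : (Fin d → ℝ) → Fin d → ℝ) :
    ∀ υ > (0:ℝ), ∃ ΔT > (0:ℝ), ∀ τ : Fin n → ℝ,
      (∀ (i : Fin n) (hi : (i : ℕ) + 1 < n), τ ⟨(i : ℕ) + 1, hi⟩ - τ i > ΔT) →
      ∀ (I : Fin d → ℝ) (φ : Fin d → AddCircle (1:ℝ)) (t : ℝ),
        |melnikovPotential p0 q0 h ω τ I φ t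
            - ∑ i : Fin n, partialMelnikov i p0 q0 h ω (τ i) I φ t| < υ :=
  melnikovPotential_approx_sum_of_partials_general hn (fun i => (hp0 i).measurable)
    (fun i => (hq0 i).measurable)
    (fun i => integrable_norm_add_dist_of_le_exp hlam (hp0 i) (hq0 i) (hdecay i))
    hcont.measurable hLip ω
end
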